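/- Under the standing assumptions on the delayed system, let η > 0, let h and ϖ be the weight and generalized metric as above, let 𝒱 be the integral operator as above, and let M = sup_{s∈[t₀,T]} ( (s−t₀)^β / E_β((a₀+a₁+η)(s−t₀)^β) ). Let y₀ ∈ C([t₀−g,T], ℝⁿ) be defined by y₀(s) = ν(s) for s ∈ [t₀−g, t₀] and y₀(s) = ν(t₀) for s ∈ [t₀, T]. Then ϖ(y₀, 𝒱y₀) ≤ M [ (a₀+a₁)‖ν‖ + a₂ ρ ] / Γ(β+1), where ‖ν‖ = sup_{s∈[t₀−g,t₀]} ‖ν(s)‖. -/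

import Mathlib

open Set ENNReal MeasureTheory intervalIntegral

/-- Euclidean `ℝⁿ`. -/
abbrev Euc (n : ℕ) := EuclideanSpace ℝ (Fin n)

/-- The Mittag-Leffler function `E_β(t) = Σ_{b ≥ 0} t^b / Γ(bβ + 1)`. -/
noncomputable def mittagLeffler (β t : ℝ) : ℝ :=
  ∑' b : ℕ, t ^ b / Real.Gamma (b * β + 1)

/-- The weight function: `h(s) = 1` for `s ≤ t₀` and `h(s) = E_β(θ (s − t₀)^β)` for `s ≥ t₀`. -/
noncomputable def weight (β t₀ θ : ℝ) (s : ℝ) : ℝ :=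
  if s ≤ t₀ then 1 else mittagLeffler β (θ * (s - t₀) ^ β)

/-- The weighted generalized metric
`ϖ(x₁, x₂) = inf { b ∈ [0, ∞] : ‖x₁(t) − x₂(t)‖ ≤ b h(t) for all t ∈ [t₀ − g, T] }`. -/
noncomputable def genDist {n : ℕ} (β t₀ T g θ : ℝ) (x₁ x₂ : ℝ → Euc n) : ℝ≥0∞ :=
  sInf {b : ℝ≥0∞ | ∀ t ∈ Icc (t₀ - g) T,
    (‖x₁ t - x₂ t‖₊ : ℝ≥0∞) ≤ b * ENNReal.ofReal (weight β t₀ θ t)}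

/-- The integral operator `𝒱`:
`(𝒱 y)(t) = ν(t)` on `[t₀ − g, t₀]` and
`(𝒱 y)(t) = ν(t₀) + (1/Γ(β)) ∫_{t₀}^t (t−s)^{β−1} [A₀ y(s) + A₁ y(s−g(s)) + A₂ d(s)
  + f(s, y(s), y(s−g(s)), d(s))] ds` on `[t₀, T]`. -/
noncomputable def Vop {n p : ℕ} (β t₀ : ℝ)
    (A₀ A₁ : Euc n →L[ℝ] Euc n) (A₂ : Euc p →L[ℝ] Euc n)
    (f : ℝ → Euc n → Euc n → Euc p → Euc n) (d : ℝ → Euc p) (gdel : ℝ → ℝ)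
    (ν : ℝ → Euc n) (y : ℝ → Euc n) : ℝ → Euc n :=
  fun t =>
    if t ≤ t₀ then ν t
    else ν t₀ + (Real.Gamma β)⁻¹ •
      ∫ s in t₀..t, ((t - s) ^ (β - 1)) •
        (A₀ (y s) + A₁ (y (s - gdel s)) + A₂ (d s) + f s (y s) (y (s - gdel s)) (d s))

/-! On `[t₀ - g, t₀]` the two functions agree. For `t > t₀` their difference is the
Riemann–Liouville integral of order `β` of the right-hand side of the system along `y₀`. Since
`‖y₀‖ ≤ ‖ν‖`, the right-hand side is bounded by `C = (a₀ + a₁)‖ν‖ + a₂ρ`, so the integral is at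
most `C (t - t₀)^β / Γ(β + 1)`, and `M` is exactly the constant that turns `(t - t₀)^β` into a
multiple of the weight. The supremum `M` is finite because `E_β ≥ 1` on `[0, ∞)`, where the series
converges by the ratio test and the log-convexity of `Γ`. -/

theorem rpow_mul_Gamma_add_one_le {x β : ℝ} (hx : 0 < x) (hβ : 0 < β) :
    x ^ β * Real.Gamma (x + 1) ≤ Real.Gamma (x + 1 + β) := by
  have hΓ : 0 < Real.Gamma x := Real.Gamma_pos_of_pos hx
  have hΓ₁ : 0 < Real.Gamma (x + 1) := Real.Gamma_pos_of_pos (by positivity)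
  have hlog : Real.log (Real.Gamma (x + 1)) = Real.log x + Real.log (Real.Gamma x) := by
    rw [Real.Gamma_add_one hx.ne', Real.log_mul hx.ne' hΓ.ne']
  have hslope := Real.convexOn_log_Gamma.slope_mono_adjacent (x := x) (y := x + 1)
    (z := x + 1 + β) (mem_Ioi.2 hx) (mem_Ioi.2 (by positivity)) (by linarith) (by linarith)
  simp only [Function.comp_apply, hlog, add_sub_cancel_left, add_sub_cancel_right, div_one,
    le_div_iff₀ hβ] at hslope
  rw [← Real.log_le_log_iff (by positivity) (Real.Gamma_pos_of_pos (by positivity)),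
    Real.log_mul (by positivity) hΓ₁.ne', Real.log_rpow hx, hlog]
  linarith

theorem summable_mittagLeffler {β : ℝ} (hβ : 0 < β) (x : ℝ) :
    Summable fun b : ℕ => x ^ b / Real.Gamma (b * β + 1) := by
  have hgrowth : Filter.Tendsto (fun b : ℕ => ((b : ℝ) * β) ^ β) Filter.atTop Filter.atTop :=
    (tendsto_rpow_atTop hβ).comp (tendsto_natCast_atTop_atTop.atTop_mul_const hβ)
  refine summable_of_ratio_norm_eventually_le (r := 1 / 2) (by norm_num) ?_
  filter_upwards [hgrowth.eventually_ge_atTop (2 * |x|), Filter.eventually_gt_atTop 0]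
    with b hb hb_pos
  have hΓ : 0 < Real.Gamma (b * β + 1) := Real.Gamma_pos_of_pos (by positivity)
  have hΓ' : 0 < Real.Gamma ((b + 1 : ℕ) * β + 1) := Real.Gamma_pos_of_pos (by positivity)
  have hratio : 2 * |x| * Real.Gamma (b * β + 1) ≤ Real.Gamma ((b + 1 : ℕ) * β + 1) :=
    calc 2 * |x| * Real.Gamma (b * β + 1)
        ≤ (b * β) ^ β * Real.Gamma (b * β + 1) := by gcongr
      _ ≤ Real.Gamma (b * β + 1 + β) := rpow_mul_Gamma_add_one_le (by positivity) hβ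
      _ = Real.Gamma ((b + 1 : ℕ) * β + 1) := by push_cast; ring_nf
  rw [norm_div, norm_div, norm_pow, norm_pow, Real.norm_eq_abs, Real.norm_of_nonneg hΓ.le,
    Real.norm_of_nonneg hΓ'.le, ← mul_div_assoc, div_le_div_iff₀ hΓ' hΓ]
  calc |x| ^ (b + 1) * Real.Gamma (b * β + 1)
      = 1 / 2 * |x| ^ b * (2 * |x| * Real.Gamma (b * β + 1)) := by ring
    _ ≤ 1 / 2 * |x| ^ b * Real.Gamma ((b + 1 : ℕ) * β + 1) := by gcongr

theorem one_le_mittagLeffler {β x : ℝ} (hβ : 0 < β) (hx : 0 ≤ x) : 1 ≤ mittagLeffler β x := by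
  have hzeroth := (summable_mittagLeffler hβ x).le_tsum 0 fun b _ =>
    div_nonneg (pow_nonneg hx b) (Real.Gamma_nonneg_of_nonneg (by positivity))
  simpa [mittagLeffler] using hzeroth

theorem le_sSup_div_mul {α : Type*} {S : Set α} {u w : α → ℝ} (hu : BddAbove (u '' S))
    (hu_nonneg : ∀ x ∈ S, 0 ≤ u x) (hw : ∀ x ∈ S, 1 ≤ w x) {x : α} (hx : x ∈ S) :
    u x ≤ sSup ((fun x => u x / w x) '' S) * w x := by
  obtain ⟨B, hB⟩ := hu
  have hbdd : BddAbove ((fun x => u x / w x) '' S) := by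
    refine ⟨B, forall_mem_image.2 fun z hz => ?_⟩
    exact (div_le_self (hu_nonneg z hz) (hw z hz)).trans (hB (mem_image_of_mem u hz))
  rw [← div_le_iff₀ (zero_lt_one.trans_le (hw x hx))]
  exact le_csSup hbdd (mem_image_of_mem _ hx)

theorem sub_rpow_le_sSup_mul_mittagLeffler {β θ t₀ T t : ℝ} (hβ : 0 < β) (hθ : 0 ≤ θ)
    (ht : t ∈ Icc t₀ T) :
    (t - t₀) ^ β ≤ sSup ((fun s => (s - t₀) ^ β / mittagLeffler β (θ * (s - t₀) ^ β)) ''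
      Icc t₀ T) * mittagLeffler β (θ * (t - t₀) ^ β) := by
  have hpow : ∀ s ∈ Icc t₀ T, 0 ≤ (s - t₀) ^ β := fun s hs =>
    Real.rpow_nonneg (sub_nonneg.2 hs.1) β
  refine le_sSup_div_mul (u := fun s => (s - t₀) ^ β)
    (w := fun s => mittagLeffler β (θ * (s - t₀) ^ β)) ⟨(T - t₀) ^ β, ?_⟩ hpow
    (fun s hs => one_le_mittagLeffler hβ (mul_nonneg hθ (hpow s hs))) ht
  exact forall_mem_image.2 fun s hs =>
    Real.rpow_le_rpow (sub_nonneg.2 hs.1) (sub_le_sub_right hs.2 t₀) hβ.le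

theorem genDist_le_ofReal {n : ℕ} {β t₀ T g θ c : ℝ} {x₁ x₂ : ℝ → Euc n} (hc : 0 ≤ c)
    (h : ∀ t ∈ Icc (t₀ - g) T, ‖x₁ t - x₂ t‖ ≤ c * weight β t₀ θ t) :
    genDist β t₀ T g θ x₁ x₂ ≤ ENNReal.ofReal c := by
  refine sInf_le fun t ht => ?_
  rw [← ENNReal.ofReal_mul hc, ← enorm_eq_nnnorm, ← ofReal_norm]
  exact ENNReal.ofReal_le_ofReal (h t ht)

theorem intervalIntegrable_sub_rpow {r : ℝ} (hr : -1 < r) (a t : ℝ) :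
    IntervalIntegrable (fun s => (t - s) ^ r) volume a t := by
  simpa using (intervalIntegrable_rpow' (a := t - a) (b := 0) hr).comp_sub_left t

theorem integral_sub_rpow {r : ℝ} (hr : -1 < r) (a t : ℝ) :
    ∫ s in a..t, (t - s) ^ r = (t - a) ^ (r + 1) / (r + 1) := by
  rw [intervalIntegral.integral_comp_sub_left (fun s : ℝ => s ^ r) t, sub_self,
    integral_rpow (Or.inl hr), Real.zero_rpow (by linarith), sub_zero]

section NormedSpace

variable {E F : Type*} [NormedAddCommGroup E] [NormedSpace ℝ E]
  [NormedAddCommGroup F] [NormedSpace ℝ F]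

/-- The Riemann–Liouville fractional integral of `y` of order `β`, based at `a`. -/
noncomputable def rlIntegral (β a : ℝ) (y : ℝ → E) (t : ℝ) : E :=
  (Real.Gamma β)⁻¹ • ∫ s in a..t, (t - s) ^ (β - 1) • y s

theorem norm_rlIntegral_le {β a t C : ℝ} (hβ : 0 < β) (hat : a ≤ t) {y : ℝ → E}
    (hy : ∀ s ∈ Ioc a t, ‖y s‖ ≤ C) :
    ‖rlIntegral β a y t‖ ≤ (t - a) ^ β * (C / Real.Gamma (β + 1)) := by
  have hr : -1 < β - 1 := by linarith
  have hintegrand : ∀ s ∈ Ioc a t, ‖(t - s) ^ (β - 1) • y s‖ ≤ (t - s) ^ (β - 1) * C := by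
    intro s hs
    have hkernel : 0 ≤ (t - s) ^ (β - 1) := Real.rpow_nonneg (sub_nonneg.2 hs.2) _
    rw [norm_smul, Real.norm_of_nonneg hkernel]
    exact mul_le_mul_of_nonneg_left (hy s hs) hkernel
  calc ‖rlIntegral β a y t‖
      = (Real.Gamma β)⁻¹ * ‖∫ s in a..t, (t - s) ^ (β - 1) • y s‖ := by
        rw [rlIntegral, norm_smul, Real.norm_of_nonneg (by positivity)]
    _ ≤ (Real.Gamma β)⁻¹ * ∫ s in a..t, (t - s) ^ (β - 1) * C := by
        gcongr
        exact norm_integral_le_of_norm_le hat (ae_of_all _ hintegrand)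
          ((intervalIntegrable_sub_rpow hr a t).mul_const C)
    _ = (t - a) ^ β * (C / Real.Gamma (β + 1)) := by
        rw [intervalIntegral.integral_mul_const, integral_sub_rpow hr, sub_add_cancel,
          Real.Gamma_add_one hβ.ne']
        field_simp

/-- The right-hand side `s ↦ A₀ y(s) + A₁ y(s - g(s)) + A₂ d(s) + f(s, y(s), y(s - g(s)), d(s))` of
the delayed system along a trajectory `y`. -/
def delayRhs (A₀ A₁ : E →L[ℝ] E) (A₂ : F →L[ℝ] E) (f : ℝ → E → E → F → E) (d : ℝ → F)
    (gdel : ℝ → ℝ) (y : ℝ → E) (s : ℝ) : E :=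
  A₀ (y s) + A₁ (y (s - gdel s)) + A₂ (d s) + f s (y s) (y (s - gdel s)) (d s)

theorem norm_delayRhs_le {A₀ A₁ : E →L[ℝ] E} {A₂ : F →L[ℝ] E} {f : ℝ → E → E → F → E}
    {d : ℝ → F} {gdel : ℝ → ℝ} {y : ℝ → E} {s k a₀ a₁ a₂ R ρ : ℝ} (hk : 0 ≤ k)
    (hf : ∀ u w v, ‖f s u w v‖ ≤ k * (‖u‖ + ‖w‖ + ‖v‖))
    (ha₀ : ‖A₀‖ + k ≤ a₀) (ha₁ : ‖A₁‖ + k ≤ a₁) (ha₂ : ‖A₂‖ + k ≤ a₂)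
    (hy : ‖y s‖ ≤ R) (hy_delay : ‖y (s - gdel s)‖ ≤ R) (hd : ‖d s‖ ≤ ρ) :
    ‖delayRhs A₀ A₁ A₂ f d gdel y s‖ ≤ (a₀ + a₁) * R + a₂ * ρ := by
  have ha₀_nonneg : 0 ≤ a₀ := le_trans (by positivity) ha₀
  have ha₁_nonneg : 0 ≤ a₁ := le_trans (by positivity) ha₁
  have ha₂_nonneg : 0 ≤ a₂ := le_trans (by positivity) ha₂
  rw [delayRhs]
  generalize y s = u at *
  generalize y (s - gdel s) = w at *
  generalize d s = v at *
  calc ‖A₀ u + A₁ w + A₂ v + f s u w v‖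
      ≤ ‖A₀ u‖ + ‖A₁ w‖ + ‖A₂ v‖ + ‖f s u w v‖ := norm_add₄_le
    _ ≤ ‖A₀‖ * ‖u‖ + ‖A₁‖ * ‖w‖ + ‖A₂‖ * ‖v‖ + k * (‖u‖ + ‖w‖ + ‖v‖) := by
        gcongr
        exacts [A₀.le_opNorm u, A₁.le_opNorm w, A₂.le_opNorm v, hf u w v]
    _ = (‖A₀‖ + k) * ‖u‖ + (‖A₁‖ + k) * ‖w‖ + (‖A₂‖ + k) * ‖v‖ := by ring
    _ ≤ a₀ * R + a₁ * R + a₂ * ρ := by gcongr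
    _ = (a₀ + a₁) * R + a₂ * ρ := by ring

end NormedSpace

theorem Vop_of_lt {n p : ℕ} {β t₀ t : ℝ} (ht : t₀ < t)
    (A₀ A₁ : Euc n →L[ℝ] Euc n) (A₂ : Euc p →L[ℝ] Euc n)
    (f : ℝ → Euc n → Euc n → Euc p → Euc n) (d : ℝ → Euc p) (gdel : ℝ → ℝ) (ν y : ℝ → Euc n) :
    Vop β t₀ A₀ A₁ A₂ f d gdel ν y t =
      ν t₀ + rlIntegral β t₀ (delayRhs A₀ A₁ A₂ f d gdel y) t :=
  if_neg ht.not_ge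

theorem genDist_Vop_le {n p : ℕ} {β t₀ T g θ C : ℝ} (hβ : 0 < β) (hθ : 0 ≤ θ) (hC : 0 ≤ C)
    {A₀ A₁ : Euc n →L[ℝ] Euc n} {A₂ : Euc p →L[ℝ] Euc n}
    {f : ℝ → Euc n → Euc n → Euc p → Euc n} {d : ℝ → Euc p} {gdel : ℝ → ℝ} {ν y : ℝ → Euc n}
    (hy_initial : ∀ t ≤ t₀, y t = ν t) (hy_const : ∀ t, t₀ < t → y t = ν t₀)
    (hrhs : ∀ s ∈ Icc t₀ T, ‖delayRhs A₀ A₁ A₂ f d gdel y s‖ ≤ C) :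
    genDist β t₀ T g θ y (Vop β t₀ A₀ A₁ A₂ f d gdel ν y) ≤
      ENNReal.ofReal (sSup ((fun s => (s - t₀) ^ β / mittagLeffler β (θ * (s - t₀) ^ β)) ''
        Icc t₀ T) * C / Real.Gamma (β + 1)) := by
  set M := sSup ((fun s => (s - t₀) ^ β / mittagLeffler β (θ * (s - t₀) ^ β)) '' Icc t₀ T)
  have hM_nonneg : 0 ≤ M := Real.sSup_nonneg <| forall_mem_image.2 fun s hs =>
    have hpow : 0 ≤ (s - t₀) ^ β := Real.rpow_nonneg (sub_nonneg.2 hs.1) β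
    div_nonneg hpow (zero_le_one.trans (one_le_mittagLeffler hβ (mul_nonneg hθ hpow)))
  refine genDist_le_ofReal (by positivity) fun t ht => ?_
  rcases le_or_gt t t₀ with htt₀ | htt₀
  · rw [Vop, if_pos htt₀, hy_initial t htt₀, sub_self, norm_zero, weight, if_pos htt₀]
    positivity
  · have ht_mem : t ∈ Icc t₀ T := ⟨htt₀.le, ht.2⟩
    rw [hy_const t htt₀, Vop_of_lt htt₀, sub_add_cancel_left, norm_neg, weight,
      if_neg htt₀.not_ge]
    calc ‖rlIntegral β t₀ (delayRhs A₀ A₁ A₂ f d gdel y) t‖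
        ≤ (t - t₀) ^ β * (C / Real.Gamma (β + 1)) :=
          norm_rlIntegral_le hβ htt₀.le fun s hs => hrhs s ⟨hs.1.le, hs.2.trans ht.2⟩
      _ ≤ M * mittagLeffler β (θ * (t - t₀) ^ β) * (C / Real.Gamma (β + 1)) := by
          gcongr
          exact sub_rpow_le_sSup_mul_mittagLeffler hβ hθ ht_mem
      _ = M * C / Real.Gamma (β + 1) * mittagLeffler β (θ * (t - t₀) ^ β) := by ring

theorem Vop_dist_y0_general {n p : ℕ} {β t₀ T g θ : ℝ} (hβ : 0 < β) (hT : t₀ < T) (hg : 0 ≤ g)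
    (hθ : 0 ≤ θ) {gdel : ℝ → ℝ} (_hgdel_cont : ContinuousOn gdel (Icc t₀ T))
    (hgdel_mem : ∀ t ∈ Icc t₀ T, gdel t ∈ Icc 0 g)
    {A₀ A₁ : Euc n →L[ℝ] Euc n} {A₂ : Euc p →L[ℝ] Euc n}
    {κ : ℝ → ℝ} (hκ_nonneg : ∀ s, 0 ≤ κ s) {f : ℝ → Euc n → Euc n → Euc p → Euc n}
    (_hf_cont : Continuous fun q : ℝ × Euc n × Euc n × Euc p => f q.1 q.2.1 q.2.2.1 q.2.2.2)
    (hf_growth : ∀ s u w v, ‖f s u w v‖ ≤ κ s * (‖u‖ + ‖w‖ + ‖v‖))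
    {ρ : ℝ} {d : ℝ → Euc p} (_hd_cont : Continuous d) (hd : ∀ t, ‖d t‖ ≤ ρ)
    {ν : ℝ → Euc n} (hν : ContinuousOn ν (Icc (t₀ - g) t₀)) {a₀ a₁ a₂ : ℝ}
    (ha₀ : ∀ s ∈ Icc t₀ T, ‖A₀‖ + κ s ≤ a₀) (ha₁ : ∀ s ∈ Icc t₀ T, ‖A₁‖ + κ s ≤ a₁)
    (ha₂ : ∀ s ∈ Icc t₀ T, ‖A₂‖ + κ s ≤ a₂)
    {M : ℝ} (hM : M = sSup ((fun s : ℝ =>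
      (s - t₀) ^ β / mittagLeffler β (θ * (s - t₀) ^ β)) '' Icc t₀ T))
    {νnorm : ℝ} (hνnorm : νnorm = sSup ((fun s => ‖ν s‖) '' Icc (t₀ - g) t₀)) :
    genDist β t₀ T g θ (fun t => if t ≤ t₀ then ν t else ν t₀)
        (Vop β t₀ A₀ A₁ A₂ f d gdel ν (fun t => if t ≤ t₀ then ν t else ν t₀)) ≤
      ENNReal.ofReal (M * ((a₀ + a₁) * νnorm + a₂ * ρ) / Real.Gamma (β + 1)) := by
  set y₀ : ℝ → Euc n := fun t => if t ≤ t₀ then ν t else ν t₀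
  have hν_le : ∀ s ∈ Icc (t₀ - g) t₀, ‖ν s‖ ≤ νnorm := fun s hs => hνnorm ▸
    le_csSup (isCompact_Icc.bddAbove_image hν.norm) (mem_image_of_mem _ hs)
  have hy₀_le : ∀ s, t₀ - g ≤ s → ‖y₀ s‖ ≤ νnorm := by
    intro s hs
    by_cases h : s ≤ t₀
    · simpa only [y₀, if_pos h] using hν_le s ⟨hs, h⟩
    · simpa only [y₀, if_neg h] using hν_le t₀ ⟨sub_le_self t₀ hg, le_rfl⟩
  have hrhs : ∀ s ∈ Icc t₀ T,
      ‖delayRhs A₀ A₁ A₂ f d gdel y₀ s‖ ≤ (a₀ + a₁) * νnorm + a₂ * ρ := fun s hs =>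
    norm_delayRhs_le (hκ_nonneg s) (hf_growth s) (ha₀ s hs) (ha₁ s hs) (ha₂ s hs)
      (hy₀_le s (by linarith [hs.1])) (hy₀_le _ (by linarith [hs.1, (hgdel_mem s hs).2])) (hd s)
  have hC_nonneg := (norm_nonneg _).trans (hrhs t₀ (left_mem_Icc.2 hT.le))
  rw [hM]
  exact genDist_Vop_le hβ hθ hC_nonneg (fun t ht => if_pos ht) (fun t ht => if_neg ht.not_ge) hrhs

/-- Under the standing assumptions on the fractional delayed system, with
`y₀ = ν` on `[t₀ − g, t₀]` and `y₀ ≡ ν(t₀)` on `[t₀, T]`, the weighted generalized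
distance between `y₀` and `𝒱 y₀` satisfies
`ϖ(y₀, 𝒱y₀) ≤ M [(a₀+a₁)‖ν‖ + a₂ρ] / Γ(β+1)`. -/
theorem Vop_dist_y0 {n p : ℕ} (β t₀ T g η : ℝ)
    (hβ0 : 0 < β) (hβ1 : β < 1) (hT : t₀ < T) (hg : 0 ≤ g) (hη : 0 < η)
    (gdel : ℝ → ℝ) (hgdel_cont : ContinuousOn gdel (Icc t₀ T))
    (hgdel_mem : ∀ t ∈ Icc t₀ T, gdel t ∈ Icc 0 g)
    (A₀ A₁ : Euc n →L[ℝ] Euc n) (A₂ : Euc p →L[ℝ] Euc n)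
    (κ : ℝ → ℝ) (hκ_cont : Continuous κ) (hκ_nonneg : ∀ s, 0 ≤ κ s)
    (f : ℝ → Euc n → Euc n → Euc p → Euc n)
    (hf_cont : Continuous fun q : ℝ × Euc n × Euc n × Euc p => f q.1 q.2.1 q.2.2.1 q.2.2.2)
    (hf_lip : ∀ (s : ℝ) (u₁ u₂ : Euc n) (u₃ : Euc p) (w₁ w₂ : Euc n) (w₃ : Euc p),
      ‖f s u₁ u₂ u₃ - f s w₁ w₂ w₃‖ ≤ κ s * (‖u₁ - w₁‖ + ‖u₂ - w₂‖ + ‖u₃ - w₃‖))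
    (hf_zero : ∀ s : ℝ, f s 0 0 0 = 0)
    (ρ : ℝ) (hρ : 0 < ρ) (d : ℝ → Euc p) (hd_cont : Continuous d) (hd : ∀ t, ‖d t‖ ≤ ρ)
    (ν : ℝ → Euc n) (hν : ContinuousOn ν (Icc (t₀ - g) t₀))
    (a₀ a₁ a₂ : ℝ)
    (ha₀ : IsGreatest ((fun s => ‖A₀‖ + κ s) '' Icc t₀ T) a₀)
    (ha₁ : IsGreatest ((fun s => ‖A₁‖ + κ s) '' Icc t₀ T) a₁)
    (ha₂ : IsGreatest ((fun s => ‖A₂‖ + κ s) '' Icc t₀ T) a₂)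
    (M : ℝ) (hM : M = sSup ((fun s : ℝ =>
      (s - t₀) ^ β / mittagLeffler β ((a₀ + a₁ + η) * (s - t₀) ^ β)) '' Icc t₀ T))
    (νnorm : ℝ) (hνnorm : νnorm = sSup ((fun s => ‖ν s‖) '' Icc (t₀ - g) t₀)) :
    genDist β t₀ T g (a₀ + a₁ + η)
        (fun t => if t ≤ t₀ then ν t else ν t₀)
        (Vop β t₀ A₀ A₁ A₂ f d gdel ν (fun t => if t ≤ t₀ then ν t else ν t₀)) ≤
      ENNReal.ofReal (M * ((a₀ + a₁) * νnorm + a₂ * ρ) / Real.Gamma (β + 1)) := by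
  have ha₀_nonneg : 0 ≤ a₀ := by
    obtain ⟨⟨s, -, rfl⟩, -⟩ := ha₀
    exact add_nonneg (norm_nonneg A₀) (hκ_nonneg s)
  have ha₁_nonneg : 0 ≤ a₁ := by
    obtain ⟨⟨s, -, rfl⟩, -⟩ := ha₁
    exact add_nonneg (norm_nonneg A₁) (hκ_nonneg s)
  exact Vop_dist_y0_general hβ0 hT hg (by positivity) hgdel_cont hgdel_mem hκ_nonneg hf_cont
    (fun s u w v => by simpa [hf_zero] using hf_lip s u w v 0 0 0) hd_cont hd hν
    (forall_mem_image.1 ha₀.2) (forall_mem_image.1 ha₁.2) (forall_mem_image.1 ha₂.2) hM hνnorm
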